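/- In the dihedral group D_{2n} with n divisible by 4, the set {srⁱ, sr^{i+n/2}} is a totally symmetric set of size 2 for every i. -/

import Mathlib

/-!
Write `n = 4 * m`, so that `n / 2 = 2 * m` and `4 * m = 0` in `ZMod n`. The product of the two
reflections is, in either order, the rotation by `± 2 * m`, and `2 * m = -(2 * m)`, so they commute.
Conjugation by the rotation `r m` sends `sr j` to `sr (j - 2 * m) = sr (j + 2 * m)`, so it
exchanges the two reflections. Since a two-element set has only the identity and the swap as
permutations, this suffices (`isTotallySymmetric_pair`).
-/

/-- A totally symmetric set in a group `G`: a finite set of pairwise commuting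
elements such that every permutation of the set is realized by conjugation. -/
def IsTotallySymmetric {G : Type*} [Group G] (S : Finset G) : Prop :=
  (∀ x ∈ S, ∀ y ∈ S, x * y = y * x) ∧
  ∀ σ : Equiv.Perm S, ∃ g : G, ∀ x : S, g * ↑x * g⁻¹ = ↑(σ x)

theorem isTotallySymmetric_pair {G : Type*} [Group G] [DecidableEq G] {a b g : G}
    (hab : a ≠ b) (hcomm : a * b = b * a) (hga : g * a * g⁻¹ = b) (hgb : g * b * g⁻¹ = a) :
    IsTotallySymmetric ({a, b} : Finset G) := by
  refine ⟨fun x hx y hy => ?_, fun σ => ?_⟩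
  · simp only [Finset.mem_insert, Finset.mem_singleton] at hx hy
    rcases hx with rfl | rfl <;> rcases hy with rfl | rfl <;> simp [hcomm]
  · have ha : a ∈ ({a, b} : Finset G) := by simp
    have hb : b ∈ ({a, b} : Finset G) := by simp
    have hne : (σ ⟨a, ha⟩ : G) ≠ σ ⟨b, hb⟩ := fun h =>
      hab (congrArg Subtype.val (σ.injective (Subtype.ext h)))
    have hσa : (σ ⟨a, ha⟩ : G) = a ∨ (σ ⟨a, ha⟩ : G) = b := by
      simpa only [Finset.mem_insert, Finset.mem_singleton] using (σ ⟨a, ha⟩).2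
    have hσb : (σ ⟨b, hb⟩ : G) = a ∨ (σ ⟨b, hb⟩ : G) = b := by
      simpa only [Finset.mem_insert, Finset.mem_singleton] using (σ ⟨b, hb⟩).2
    rcases hσa with h | h
    · have h' : (σ ⟨b, hb⟩ : G) = b := hσb.resolve_left fun e => hne (h.trans e.symm)
      refine ⟨1, ?_⟩
      rintro ⟨x, hx⟩
      have hx' := hx
      simp only [Finset.mem_insert, Finset.mem_singleton] at hx'
      rcases hx' with rfl | rfl
      · simp [h]
      · simp [h']
    · have h' : (σ ⟨b, hb⟩ : G) = a := hσb.resolve_right fun e => hne (h.trans e.symm)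
      refine ⟨g, ?_⟩
      rintro ⟨x, hx⟩
      have hx' := hx
      simp only [Finset.mem_insert, Finset.mem_singleton] at hx'
      rcases hx' with rfl | rfl
      · exact hga.trans h.symm
      · exact hgb.trans h'.symm

theorem stmt_6 (n : ℕ) (hn : 0 < n) (h4 : 4 ∣ n) (i : ZMod n) :
    IsTotallySymmetric ({DihedralGroup.sr i, DihedralGroup.sr (i + ((n / 2 : ℕ) : ZMod n))} :
      Finset (DihedralGroup n)) ∧
    ({DihedralGroup.sr i, DihedralGroup.sr (i + ((n / 2 : ℕ) : ZMod n))} :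
      Finset (DihedralGroup n)).card = 2 := by
  obtain ⟨m, hm⟩ := h4
  have hhalf : ((n / 2 : ℕ) : ZMod n) = 2 * (m : ZMod n) := by
    rw [show n / 2 = 2 * m by omega]
    push_cast
    rfl
  have h0 : (4 : ZMod n) * (m : ZMod n) = 0 := by
    have h : ((4 * m : ℕ) : ZMod n) = 0 :=
      (congrArg (Nat.cast : ℕ → ZMod n) hm).symm.trans (ZMod.natCast_self n)
    exact_mod_cast h
  have hne : DihedralGroup.sr i ≠ DihedralGroup.sr (i + ((n / 2 : ℕ) : ZMod n)) := by
    intro h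
    have h1 : ((n / 2 : ℕ) : ZMod n) = 0 := by simpa using h
    rw [ZMod.natCast_eq_zero_iff] at h1
    have := Nat.le_of_dvd (by omega) h1
    omega
  refine ⟨isTotallySymmetric_pair (g := DihedralGroup.r (m : ZMod n)) hne ?_ ?_ ?_,
    Finset.card_pair hne⟩ <;>
  simp only [hhalf, DihedralGroup.sr_mul_sr, DihedralGroup.r_mul_sr, DihedralGroup.inv_r,
    DihedralGroup.sr_mul_r, DihedralGroup.r.injEq, DihedralGroup.sr.injEq]
  · linear_combination h0
  · linear_combination -h0
  · ring
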